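/- Fix an integer p ≥ 2, θ ∈ S^{p-1}, f ∈ 𝓕, and let κ_n = τ_n p/√n, where the real sequence (τ_n) converges to τ ∈ ℝ. Define the Bingham statistic Q^{(n)} : (S^{p-1})^n → ℝ by Q^{(n)}(x) := (n p(p+2)/2) ( tr[S_n(x)²] − 1/p ), and set d_p := p(p+1)/2 − 1. Then, under P^{(n)}_{θ,κ_n,f}, Q^{(n)} converges in distribution as n → ∞ to the law of ‖G + μ‖², where G is a standard Gaussian random vector on ℝ^{d_p} (mean 0, identity covariance) and μ ∈ ℝ^{d_p} is any fixed vector with ‖μ‖² = 2(p−1)τ²/(p+2); that is, Q^{(n)} converges to the noncentral chi-square distribution with d_p degrees of freedom and noncentrality parameter 2(p−1)τ²/(p+2). -/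

import Mathlib

open MeasureTheory ProbabilityTheory Filter Matrix Real
open scoped ENNReal NNReal Topology

noncomputable section

/-- The normalizing constant `c_p = 1 / ∫_{-1}^1 (1-s²)^{(p-3)/2} ds`. -/
def c0 (p : ℕ) : ℝ := 1 / ∫ s in (-1:ℝ)..1, (1 - s ^ 2) ^ (((p : ℝ) - 3) / 2)

/-- The normalizing constant `c_{p,κ,f} = 1 / ∫_{-1}^1 (1-s²)^{(p-3)/2} f(κ s²) ds`. -/
def cKF (p : ℕ) (κ : ℝ) (f : ℝ → ℝ) : ℝ :=
  1 / ∫ s in (-1:ℝ)..1, (1 - s ^ 2) ^ (((p : ℝ) - 3) / 2) * f (κ * s ^ 2)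

/-- The sample covariance matrix `S_n(x) = (1/n) Σ_i x_i x_i'`. -/
def Sn (p n : ℕ) (x : Fin n → (Fin p → ℝ)) : Matrix (Fin p) (Fin p) ℝ :=
  Matrix.of fun a b => (1 / (n:ℝ)) * ∑ i, x i a * x i b

/-!
On the sphere the Bingham statistic is the squared norm of `n^{-1/2} ∑ X(xᵢ)`, where the score
`X(y) = √(p(p+2)/2) (y yᵀ - I/p)` takes values in the space of symmetric traceless matrices, of
dimension `p(p+1)/2 - 1`. The second and fourth moments of the uniform law say exactly that `X` is
centred with identity covariance, so under uniformity the sum is asymptotically standard Gaussian.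

By rotation invariance `c_{p,κ,f}/c_p` is the inverse of the uniform mean of `f(κ (y'θ)²)`, so
`P_{θ,κ,f}` is the uniform law reweighted by `f(κ (y'θ)²)`. As `κ → 0` and `f(v) = 1 + v + o(v)`,
this leaves the covariance of `X` unchanged in the limit and, for `√n κₙ → τ p`, shifts the
normalized mean to `τ p E[X(y) (y'θ)²] = (2τ/(p+2)) X(θ)`, whose squared norm is `2(p-1)τ²/(p+2)`.
A central limit theorem for triangular arrays concludes, the law of `‖G + m‖²` depending only on
the dimension and on `‖m‖`.
-/

section UniformOnSphere

variable {ι : Type*} [Fintype ι]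

theorem dotProduct_self_eq_sum_sq (y : ι → ℝ) : y ⬝ᵥ y = ∑ a, y a ^ 2 := by
  simp only [dotProduct, sq]

theorem isCompact_setOf_dotProduct_self_eq_one : IsCompact {y : ι → ℝ | y ⬝ᵥ y = 1} := by
  have hclosed : IsClosed {y : ι → ℝ | y ⬝ᵥ y = 1} :=
    isClosed_eq (by fun_prop) continuous_const
  refine Metric.isCompact_of_isClosed_isBounded hclosed
    ((Metric.isBounded_closedBall (x := (0 : ι → ℝ)) (r := 1)).subset fun y hy => ?_)
  rw [mem_closedBall_zero_iff, pi_norm_le_iff_of_nonneg zero_le_one]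
  intro a
  rw [Real.norm_eq_abs, ← sq_le_one_iff_abs_le_one, sq, ← (show y ⬝ᵥ y = 1 from hy)]
  exact Finset.single_le_sum (f := fun a => y a * y a) (fun _ _ => mul_self_nonneg _)
    (Finset.mem_univ a)

theorem exists_abs_le_of_continuous {φ : (ι → ℝ) → ℝ} (hφ : Continuous φ) :
    ∃ C, ∀ y : ι → ℝ, y ⬝ᵥ y = 1 → |φ y| ≤ C :=
  isCompact_setOf_dotProduct_self_eq_one.exists_bound_of_continuousOn hφ.continuousOn

theorem contDiff_dotProduct_right (v : ι → ℝ) : ContDiff ℝ 1 (v ⬝ᵥ ·) := by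
  simp only [dotProduct]
  fun_prop

theorem contDiff_dotProduct_mulVec_self (B : Matrix ι ι ℝ) :
    ContDiff ℝ 1 fun y => y ⬝ᵥ B *ᵥ y := by
  simp only [dotProduct, mulVec]
  fun_prop

theorem hasFDerivAt_dotProduct_right (v y : ι → ℝ) :
    HasFDerivAt (v ⬝ᵥ ·) (dotProductBilin ℝ ℝ v).toContinuousLinearMap y :=
  (dotProductBilin ℝ ℝ v).toContinuousLinearMap.hasFDerivAt

theorem fderiv_dotProduct_right_pow (v y w : ι → ℝ) (k : ℕ) :
    fderiv ℝ (fun y => (v ⬝ᵥ y) ^ (k + 1)) y w = (k + 1) * (v ⬝ᵥ y) ^ k * (v ⬝ᵥ w) := by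
  rw [((hasFDerivAt_dotProduct_right v y).pow (k + 1)).fderiv]
  simp

theorem fderiv_dotProduct_mul_quadForm (v : ι → ℝ) {B : Matrix ι ι ℝ} (hB : Bᵀ = B)
    (y w : ι → ℝ) :
    fderiv ℝ (fun y => (v ⬝ᵥ y) * (y ⬝ᵥ B *ᵥ y)) y w =
      2 * ((v ⬝ᵥ y) * (B *ᵥ w ⬝ᵥ y)) + (v ⬝ᵥ w) * (y ⬝ᵥ B *ᵥ y) := by
  classical
  have hquad := (toLinearMap₂' ℝ B).toContinuousBilinearMap.hasFDerivAt_of_bilinear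
    (hasFDerivAt_id y) (hasFDerivAt_id y)
  have hsymm : w ⬝ᵥ B *ᵥ y = y ⬝ᵥ B *ᵥ w := by
    rw [dotProduct_mulVec, ← mulVec_transpose, hB, dotProduct_comm]
  simp only [LinearMap.toContinuousBilinearMap_apply, id, toLinearMap₂'_apply'] at hquad
  rw [((hasFDerivAt_dotProduct_right v y).fun_mul hquad).fderiv]
  simp [toLinearMap₂'_apply', hsymm, dotProduct_comm (B *ᵥ w)]
  ring

variable [DecidableEq ι]

theorem dotProduct_mulVec_self_of_orthogonal {O : Matrix ι ι ℝ} (hO : O * Oᵀ = 1) (y : ι → ℝ) :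
    O *ᵥ y ⬝ᵥ O *ᵥ y = y ⬝ᵥ y := by
  rw [dotProduct_mulVec, ← mulVec_transpose, mulVec_mulVec, mul_eq_one_comm.mp hO, one_mulVec]

open scoped Matrix.Norms.Operator in
theorem hasDerivAt_exp_smul_mulVec (A : Matrix ι ι ℝ) (y : ι → ℝ) (t : ℝ) :
    HasDerivAt (fun s : ℝ => NormedSpace.exp (s • A) *ᵥ y)
      (A *ᵥ (NormedSpace.exp (t • A) *ᵥ y)) t := by
  rw [mulVec_mulVec]
  exact ((mulVecBilin ℝ ℝ).flip y).toContinuousLinearMap.hasFDerivAt.comp_hasDerivAt t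
    (hasDerivAt_exp_smul_const' A t)

open scoped Matrix.Norms.Operator in
theorem exp_smul_mul_transpose_of_skew {A : Matrix ι ι ℝ} (hA : Aᵀ = -A) (t : ℝ) :
    NormedSpace.exp (t • A) * (NormedSpace.exp (t • A))ᵀ = 1 := by
  rw [← exp_transpose, transpose_smul, hA, smul_neg,
    ← Matrix.exp_add_of_commute _ _ (Commute.neg_right (.refl (t • A))), add_neg_cancel,
    NormedSpace.exp_zero]

theorem map_eq_sum_mul_map_single (L : (ι → ℝ) →L[ℝ] ℝ) (y : ι → ℝ) :
    L y = ∑ a, y a * L (Pi.single a 1) := by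
  conv_lhs => rw [pi_eq_sum_univ' y, map_sum]
  simp [Pi.single]

theorem sum_fderiv_apply_mul {ψ : (ι → ℝ) → ℝ} {y : ι → ℝ} (hψ : DifferentiableAt ℝ ψ y)
    (v : ι → ℝ) :
    ∑ a, fderiv ℝ (fun y => y a * ψ y) y (y a • v - (v ⬝ᵥ y) • Pi.single a 1) =
      (y ⬝ᵥ y) * fderiv ℝ ψ y v - (v ⬝ᵥ y) * fderiv ℝ ψ y y -
        (Fintype.card ι - 1) * ((v ⬝ᵥ y) * ψ y) := by
  have hderiv (a : ι) (w : ι → ℝ) :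
      fderiv ℝ (fun y => y a * ψ y) y w = y a * fderiv ℝ ψ y w + ψ y * w a := by
    rw [((hasFDerivAt_apply (𝕜 := ℝ) a y).fun_mul hψ.hasFDerivAt).fderiv]
    simp
  calc _ = ∑ a, (y a * y a * fderiv ℝ ψ y v - (v ⬝ᵥ y) * (y a * fderiv ℝ ψ y (Pi.single a 1)) +
            v a * y a * ψ y - (v ⬝ᵥ y) * ψ y) := by
          refine Finset.sum_congr rfl fun a _ => ?_
          simp only [hderiv, map_sub, map_smul, smul_eq_mul, Pi.sub_apply, Pi.smul_apply,
            Pi.single_eq_same]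
          ring
    _ = _ := by
          rw [map_eq_sum_mul_map_single _ y]
          simp only [Finset.sum_sub_distrib, Finset.sum_add_distrib, ← Finset.sum_mul,
            ← Finset.mul_sum, Finset.sum_const, Finset.card_univ, nsmul_eq_mul, dotProduct]
          ring

theorem quadForm_eq_sum (B : Matrix ι ι ℝ) (y : ι → ℝ) :
    y ⬝ᵥ B *ᵥ y = ∑ a, (Pi.single a 1 ⬝ᵥ y) * (B a ⬝ᵥ y) := by
  simp only [single_one_dotProduct]
  rfl

/-- The uniform law on the Euclidean unit sphere of `ℝ^ι`, up to its total mass: a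
rotation-invariant measure on `ℝ^ι` carried by the sphere. The sphere is written with `⬝ᵥ` because
the norm of `ι → ℝ` is the sup norm. -/
structure IsUniformOnSphere (U : Measure (ι → ℝ)) : Prop where
  ae_dotProduct_self : ∀ᵐ y ∂U, y ⬝ᵥ y = 1
  map_mulVec : ∀ O : Matrix ι ι ℝ, O * Oᵀ = 1 → U.map (O *ᵥ ·) = U

theorem isUniformOnSphere_iff {U : Measure (ι → ℝ)} : IsUniformOnSphere U ↔
    U {y | ∑ a, y a ^ 2 = 1}ᶜ = 0 ∧ ∀ O : Matrix ι ι ℝ, O * Oᵀ = 1 → U.map (O *ᵥ ·) = U := by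
  simp_rw [← dotProduct_self_eq_sum_sq]
  exact ⟨fun h => ⟨h.1, h.2⟩, fun h => ⟨h.1, h.2⟩⟩

namespace IsUniformOnSphere

variable {U : Measure (ι → ℝ)}

theorem integral_comp_mulVec (hU : IsUniformOnSphere U) {O : Matrix ι ι ℝ} (hO : O * Oᵀ = 1)
    {φ : (ι → ℝ) → ℝ} (hφ : Continuous φ) : ∫ y, φ (O *ᵥ y) ∂U = ∫ y, φ y ∂U := by
  conv_rhs => rw [← hU.map_mulVec O hO]
  exact (integral_map (by fun_prop) hφ.aestronglyMeasurable).symm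

theorem integral_dotProduct (hU : IsUniformOnSphere U) (v : ι → ℝ) : ∫ y, v ⬝ᵥ y ∂U = 0 := by
  have h := hU.integral_comp_mulVec (O := -1) (φ := (v ⬝ᵥ ·)) (by simp) (by fun_prop)
  simp only [neg_mulVec, one_mulVec, dotProduct_neg, integral_neg] at h
  linarith

variable [IsFiniteMeasure U]

theorem integrable (hU : IsUniformOnSphere U) {φ : (ι → ℝ) → ℝ} (hφ : Continuous φ) :
    Integrable φ U := by
  obtain ⟨C, hC⟩ := exists_abs_le_of_continuous hφ
  refine .of_bound hφ.aestronglyMeasurable C ?_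
  filter_upwards [hU.ae_dotProduct_self] with y hy using hC y hy

theorem integral_fderiv_mulVec_of_skew (hU : IsUniformOnSphere U) {A : Matrix ι ι ℝ}
    (hA : Aᵀ = -A) {ψ : (ι → ℝ) → ℝ} (hψ : ContDiff ℝ 1 ψ) :
    ∫ y, fderiv ℝ ψ y (A *ᵥ y) ∂U = 0 := by
  have hcont : Continuous fun y => fderiv ℝ ψ y (A *ᵥ y) :=
    (hψ.continuous_fderiv one_ne_zero).clm_apply (by fun_prop)
  obtain ⟨C, hC⟩ := exists_abs_le_of_continuous hcont
  have hrot (t : ℝ) := exp_smul_mul_transpose_of_skew hA t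
  have hderiv (y : ι → ℝ) (t : ℝ) := (hψ.differentiable one_ne_zero
    (NormedSpace.exp (t • A) *ᵥ y)).hasFDerivAt.comp_hasDerivAt t (hasDerivAt_exp_smul_mulVec A y t)
  have hF := (hasDerivAt_integral_of_dominated_loc_of_deriv_le (μ := U) (x₀ := (0 : ℝ))
    (bound := fun _ => C) Filter.univ_mem
    (.of_forall fun t => (hψ.continuous.comp (by fun_prop)).aestronglyMeasurable)
    (hU.integrable (hψ.continuous.comp (by fun_prop)))
    (by simpa using hcont.aestronglyMeasurable)
    (hU.ae_dotProduct_self.mono fun y hy t _ =>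
      hC _ ((dotProduct_mulVec_self_of_orthogonal (hrot t) y).trans hy))
    (integrable_const C) (.of_forall fun y t _ => hderiv y t)).2
  have hconst : (fun t : ℝ => ∫ y, ψ (NormedSpace.exp (t • A) *ᵥ y) ∂U) = fun _ => ∫ y, ψ y ∂U :=
    funext fun t => hU.integral_comp_mulVec (hrot t) hψ.continuous
  simpa using hF.unique (hconst ▸ hasDerivAt_const (0 : ℝ) (∫ y, ψ y ∂U))

theorem integral_fderiv_sub (hU : IsUniformOnSphere U) {ψ : (ι → ℝ) → ℝ} (hψ : ContDiff ℝ 1 ψ)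
    (v : ι → ℝ) :
    ∫ y, (fderiv ℝ ψ y v - (v ⬝ᵥ y) * fderiv ℝ ψ y y) ∂U =
      (Fintype.card ι - 1) * ∫ y, (v ⬝ᵥ y) * ψ y ∂U := by
  -- Sum over `a` the rotation invariance of `y a * ψ y` along the skew field `v eₐᵀ - eₐ vᵀ`.
  let A (a : ι) : Matrix ι ι ℝ :=
    vecMulVec v (Pi.single a 1) - vecMulVec (Pi.single a 1) v
  have hA (a : ι) : (A a)ᵀ = -A a := by simp [A, transpose_sub, transpose_vecMulVec]
  have hAy (a : ι) (y : ι → ℝ) : A a *ᵥ y = y a • v - (v ⬝ᵥ y) • Pi.single a 1 := by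
    simp [A, sub_mulVec, vecMulVec_mulVec]
  have hcoord (a : ι) : ContDiff ℝ 1 fun y : ι → ℝ => y a * ψ y := (contDiff_apply ℝ ℝ a).mul hψ
  have hcont {φ : (ι → ℝ) → ℝ} (hφ : ContDiff ℝ 1 φ) {w : (ι → ℝ) → ι → ℝ} (hw : Continuous w) :
      Continuous fun y => fderiv ℝ φ y (w y) :=
    (hφ.continuous_fderiv one_ne_zero).clm_apply hw
  have hv := (contDiff_dotProduct_right v).continuous
  have hint : Integrable (fun y => fderiv ℝ ψ y v - (v ⬝ᵥ y) * fderiv ℝ ψ y y) U :=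
    hU.integrable ((hcont hψ continuous_const).sub (hv.mul (hcont hψ continuous_id)))
  have hmul : Integrable (fun y => (v ⬝ᵥ y) * ψ y) U := hU.integrable (hv.mul hψ.continuous)
  have hsum : ∀ᵐ y ∂U, ∑ a, fderiv ℝ (fun y => y a * ψ y) y (A a *ᵥ y) =
      (fderiv ℝ ψ y v - (v ⬝ᵥ y) * fderiv ℝ ψ y y) -
        (Fintype.card ι - 1) * ((v ⬝ᵥ y) * ψ y) := by
    filter_upwards [hU.ae_dotProduct_self] with y hy
    simp_rw [hAy, sum_fderiv_apply_mul (hψ.differentiable one_ne_zero y), hy]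
    ring
  have hzero := integral_congr_ae hsum
  rw [integral_finsetSum _ fun a _ => hU.integrable (hcont (hcoord a) (by fun_prop)),
    Finset.sum_eq_zero fun a _ => hU.integral_fderiv_mulVec_of_skew (hA a) (hcoord a),
    integral_sub hint (hmul.const_mul _),
    integral_const_mul] at hzero
  exact sub_eq_zero.mp hzero.symm

theorem integral_fderiv_of_homogeneous (hU : IsUniformOnSphere U) {ψ : (ι → ℝ) → ℝ}
    (hψ : ContDiff ℝ 1 ψ) {k : ℝ} (hk : ∀ y, fderiv ℝ ψ y y = k * ψ y) (v : ι → ℝ) :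
    ∫ y, fderiv ℝ ψ y v ∂U = (Fintype.card ι - 1 + k) * ∫ y, (v ⬝ᵥ y) * ψ y ∂U := by
  have hderiv : Integrable (fun y => fderiv ℝ ψ y v) U :=
    hU.integrable ((hψ.continuous_fderiv one_ne_zero).clm_apply continuous_const)
  have hmul : Integrable (fun y => (v ⬝ᵥ y) * ψ y) U :=
    hU.integrable ((contDiff_dotProduct_right v).continuous.mul hψ.continuous)
  have h := hU.integral_fderiv_sub hψ v
  simp_rw [hk, mul_left_comm _ k] at h
  rw [integral_sub hderiv (hmul.const_mul k), integral_const_mul] at h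
  linear_combination h

theorem integral_dotProduct_pow_add_two (hU : IsUniformOnSphere U) {v : ι → ℝ} (hv : v ⬝ᵥ v = 1)
    (k : ℕ) :
    (k + Fintype.card ι) * ∫ y, (v ⬝ᵥ y) ^ (k + 2) ∂U = (k + 1) * ∫ y, (v ⬝ᵥ y) ^ k ∂U := by
  have h := hU.integral_fderiv_of_homogeneous (k := k + 1)
    ((contDiff_dotProduct_right v).pow (k + 1))
    (fun y => by rw [fderiv_dotProduct_right_pow]; ring) v
  simp only [fderiv_dotProduct_right_pow, hv, mul_one, integral_const_mul, ← pow_succ'] at h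
  linear_combination -h

theorem integral_dotProduct_mul_dotProduct (hU : IsUniformOnSphere U) (u v : ι → ℝ) :
    Fintype.card ι * ∫ y, (u ⬝ᵥ y) * (v ⬝ᵥ y) ∂U = U.real Set.univ * (u ⬝ᵥ v) := by
  have hderiv (y w : ι → ℝ) : fderiv ℝ (v ⬝ᵥ ·) y w = v ⬝ᵥ w := by
    simpa using fderiv_dotProduct_right_pow v y w 0
  have h := hU.integral_fderiv_of_homogeneous (k := 1) (contDiff_dotProduct_right v)
    (fun y => by rw [hderiv, one_mul]) u
  simp only [hderiv, integral_const, smul_eq_mul, dotProduct_comm v u] at h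
  linear_combination -h

theorem integral_quadForm (hU : IsUniformOnSphere U) (B : Matrix ι ι ℝ) :
    Fintype.card ι * ∫ y, y ⬝ᵥ B *ᵥ y ∂U = U.real Set.univ * B.trace := by
  simp_rw [quadForm_eq_sum B]
  rw [integral_finsetSum _ fun a _ => hU.integrable (by fun_prop), Finset.mul_sum]
  simp_rw [hU.integral_dotProduct_mul_dotProduct, ← Finset.mul_sum]
  simp [Matrix.trace]

theorem integral_dotProduct_mul_dotProduct_mul_quadForm (hU : IsUniformOnSphere U)
    (u v : ι → ℝ) {B : Matrix ι ι ℝ} (hB : Bᵀ = B) :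
    Fintype.card ι * (Fintype.card ι + 2) *
        ∫ y, (u ⬝ᵥ y) * ((v ⬝ᵥ y) * (y ⬝ᵥ B *ᵥ y)) ∂U =
      U.real Set.univ * ((u ⬝ᵥ v) * B.trace + 2 * (u ⬝ᵥ B *ᵥ v)) := by
  have h := hU.integral_fderiv_of_homogeneous (k := 3)
    ((contDiff_dotProduct_right v).mul (contDiff_dotProduct_mulVec_self B))
    (fun y => by rw [fderiv_dotProduct_mul_quadForm v hB, dotProduct_comm (B *ᵥ y)]; ring) u
  simp only [fderiv_dotProduct_mul_quadForm v hB] at h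
  rw [integral_add (hU.integrable (by fun_prop)) (hU.integrable (by fun_prop)),
    integral_const_mul, integral_const_mul] at h
  have htrace := hU.integral_quadForm B
  have hcross := hU.integral_dotProduct_mul_dotProduct v (B *ᵥ u)
  have hsymm : v ⬝ᵥ B *ᵥ u = u ⬝ᵥ B *ᵥ v := by
    rw [dotProduct_mulVec, ← mulVec_transpose, hB, dotProduct_comm]
  rw [hsymm] at hcross
  rw [dotProduct_comm v u] at h
  linear_combination (-Fintype.card ι : ℝ) * h + (u ⬝ᵥ v) * htrace + 2 * hcross

theorem integral_quadForm_mul_quadForm (hU : IsUniformOnSphere U)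
    (A : Matrix ι ι ℝ) {B : Matrix ι ι ℝ} (hB : Bᵀ = B) :
    Fintype.card ι * (Fintype.card ι + 2) * ∫ y, (y ⬝ᵥ A *ᵥ y) * (y ⬝ᵥ B *ᵥ y) ∂U =
      U.real Set.univ * (A.trace * B.trace + 2 * (A * B).trace) := by
  have hexpand (y : ι → ℝ) : (y ⬝ᵥ A *ᵥ y) * (y ⬝ᵥ B *ᵥ y) =
      ∑ a, (Pi.single a 1 ⬝ᵥ y) * ((A a ⬝ᵥ y) * (y ⬝ᵥ B *ᵥ y)) := by
    simp_rw [← mul_assoc, ← Finset.sum_mul, quadForm_eq_sum A y]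
  simp_rw [hexpand]
  rw [integral_finsetSum _ fun a _ => hU.integrable (by fun_prop), Finset.mul_sum]
  simp_rw [hU.integral_dotProduct_mul_dotProduct_mul_quadForm _ _ hB, ← Finset.mul_sum]
  rw [Finset.sum_add_distrib, ← Finset.sum_mul, ← Finset.mul_sum]
  have hrow (a : ι) : (Pi.single a 1 ⬝ᵥ B *ᵥ A a) = (A * B) a a := by
    rw [single_one_dotProduct, ← hB, mulVec_transpose, hB]
    rfl
  simp_rw [hrow, single_one_dotProduct]
  rfl

end IsUniformOnSphere

end UniformOnSphere

section MomentProblem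

theorem hasSum_charFun_of_abs_le {μ : Measure ℝ} [IsFiniteMeasure μ] {R : ℝ}
    (hμ : ∀ᵐ x ∂μ, |x| ≤ R) (t : ℝ) :
    HasSum (fun k : ℕ => (t * Complex.I) ^ k / k.factorial * ∫ x, x ^ k ∂μ) (charFun μ t) := by
  have hterm (k : ℕ) (x : ℝ) : (t * x * Complex.I) ^ k / (k.factorial : ℂ) =
      (t * Complex.I) ^ k / k.factorial * ((x ^ k : ℝ) : ℂ) := by
    push_cast
    ring
  have hseries := hasSum_integral_of_dominated_convergence (μ := μ)
    (F := fun (k : ℕ) (x : ℝ) => (t * x * Complex.I) ^ k / (k.factorial : ℂ))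
    (fun k _ => (|t| * R) ^ k / k.factorial) (fun k => by fun_prop)
    (fun k => hμ.mono fun x hx => ?_)
    (.of_forall fun _ => Real.summable_pow_div_factorial _) (integrable_const _)
    (.of_forall fun x => NormedSpace.expSeries_div_hasSum_exp (t * x * Complex.I))
  · simpa only [charFun_apply_real, Complex.exp_eq_exp_ℂ, hterm, integral_const_mul,
      integral_complex_ofReal] using hseries
  · simp only [norm_div, norm_pow, norm_mul, Complex.norm_real, Complex.norm_I, mul_one,
      Complex.norm_natCast, Real.norm_eq_abs]
    gcongr

theorem ext_of_integral_pow_eq {μ ν : Measure ℝ} [IsFiniteMeasure μ] [IsFiniteMeasure ν] {R : ℝ}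
    (hμ : ∀ᵐ x ∂μ, |x| ≤ R) (hν : ∀ᵐ x ∂ν, |x| ≤ R)
    (h : ∀ k : ℕ, ∫ x, x ^ k ∂μ = ∫ x, x ^ k ∂ν) : μ = ν := by
  refine Measure.ext_of_charFun (funext fun t => ?_)
  have hsum := hasSum_charFun_of_abs_le hμ t
  simp_rw [h] at hsum
  exact hsum.unique (hasSum_charFun_of_abs_le hν t)

end MomentProblem

section MarginalLaw

theorem intervalIntegrable_one_sub_sq_rpow {α : ℝ} (hα : -(1 / 2) ≤ α) :
    IntervalIntegrable (fun s : ℝ => (1 - s ^ 2) ^ α) volume (-1) 1 := by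
  have harcsin : IntervalIntegrable (fun s : ℝ => 1 / √(1 - s ^ 2)) volume (-1) 1 := by
    rw [intervalIntegrable_iff_integrableOn_Ioc_of_le (by norm_num)]
    exact intervalIntegral.integrableOn_deriv_of_nonneg Real.continuous_arcsin.continuousOn
      (fun s hs => Real.hasDerivAt_arcsin hs.1.ne' hs.2.ne) (fun s _ => by positivity)
  refine (harcsin.add (intervalIntegrable_const (c := 1))).mono_fun'
    (Measurable.aestronglyMeasurable (by fun_prop)) ?_
  rw [Set.uIoc_of_le (by norm_num)]
  filter_upwards [ae_restrict_mem measurableSet_Ioc] with s hs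
  have hnonneg : 0 ≤ 1 - s ^ 2 := by nlinarith [hs.1, hs.2]
  rw [Real.norm_of_nonneg (by positivity), one_div, Real.sqrt_eq_rpow, ← Real.rpow_neg hnonneg]
  rcases hnonneg.eq_or_lt with hzero | hpos
  · rw [← hzero]
    linarith [Real.zero_rpow_le_one α, Real.rpow_nonneg le_rfl (-(1 / 2) : ℝ)]
  · linarith [Real.rpow_le_rpow_of_exponent_ge hpos (by nlinarith) hα]

theorem hasDerivAt_pow_mul_one_sub_sq_rpow (α : ℝ) (k : ℕ) {s : ℝ} (hs : 0 < 1 - s ^ 2) :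
    HasDerivAt (fun s : ℝ => s ^ (k + 1) * (1 - s ^ 2) ^ (α + 1))
      ((k + 1) * ((1 - s ^ 2) ^ α * s ^ k) -
        (k + 2 * α + 3) * ((1 - s ^ 2) ^ α * s ^ (k + 2))) s := by
  have hbase : HasDerivAt (fun s : ℝ => 1 - s ^ 2) (-(2 * s)) s := by
    simpa using (hasDerivAt_pow 2 s).const_sub 1
  refine ((hasDerivAt_pow (k + 1) s).mul (hbase.rpow_const (Or.inl hs.ne'))).congr_deriv ?_
  rw [Real.rpow_add_one hs.ne']
  simp only [add_sub_cancel_right, Nat.cast_add, Nat.cast_one, Nat.add_sub_cancel]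
  ring

theorem integral_one_sub_sq_rpow_mul_pow_add_two {α : ℝ} (hα : -(1 / 2) ≤ α) (k : ℕ) :
    (k + 2 * α + 3) * ∫ s in (-1 : ℝ)..1, (1 - s ^ 2) ^ α * s ^ (k + 2) =
      (k + 1) * ∫ s in (-1 : ℝ)..1, (1 - s ^ 2) ^ α * s ^ k := by
  have hint (j : ℕ) : IntervalIntegrable (fun s : ℝ => (1 - s ^ 2) ^ α * s ^ j) volume (-1) 1 :=
    (intervalIntegrable_one_sub_sq_rpow hα).mul_continuousOn (by fun_prop)
  have hcont : Continuous fun s : ℝ => s ^ (k + 1) * (1 - s ^ 2) ^ (α + 1) :=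
    (by fun_prop : Continuous fun s : ℝ => s ^ (k + 1)).mul
      (Continuous.rpow_const (by fun_prop) fun _ => .inr (by linarith))
  have hftc := intervalIntegral.integral_eq_sub_of_hasDerivAt_of_le (by norm_num)
    hcont.continuousOn (fun s hs => hasDerivAt_pow_mul_one_sub_sq_rpow α k
      (by nlinarith [hs.1, hs.2] : 0 < 1 - s ^ 2))
    (((hint k).const_mul _).sub ((hint (k + 2)).const_mul _))
  rw [intervalIntegral.integral_sub ((hint k).const_mul _) ((hint (k + 2)).const_mul _),
    intervalIntegral.integral_const_mul, intervalIntegral.integral_const_mul] at hftc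
  have hboundary : (0 : ℝ) ^ (α + 1) = 0 := Real.zero_rpow (by linarith)
  norm_num [hboundary] at hftc
  linarith

theorem integral_one_sub_sq_rpow_pos {α : ℝ} (hα : -(1 / 2) ≤ α) :
    0 < ∫ s in (-1 : ℝ)..1, (1 - s ^ 2) ^ α := by
  refine intervalIntegral.intervalIntegral_pos_of_pos_on
    (intervalIntegrable_one_sub_sq_rpow hα) (fun s hs => ?_) (by norm_num)
  have hpos : 0 < 1 - s ^ 2 := by nlinarith [hs.1, hs.2]
  positivity

theorem integral_one_sub_sq_rpow_mul_self (α : ℝ) :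
    ∫ s in (-1 : ℝ)..1, (1 - s ^ 2) ^ α * s = 0 := by
  have h := intervalIntegral.integral_comp_neg (a := -1) (b := 1)
    fun s : ℝ => (1 - s ^ 2) ^ α * s
  simp only [neg_neg, neg_sq, mul_neg, intervalIntegral.integral_neg] at h
  linarith

variable {p : ℕ}

/-- The law on `ℝ` with density `c_p (1 - s²)^{(p-3)/2}` on `(-1, 1]`: the law of the inner product
of a fixed unit vector with a uniform point of the sphere of `ℝ^p`. -/
def marginalLaw (p : ℕ) : Measure ℝ :=
  (volume.restrict (Set.Ioc (-1) 1)).withDensity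
    fun s => ENNReal.ofReal (c0 p * (1 - s ^ 2) ^ (((p : ℝ) - 3) / 2))

theorem neg_half_le_exponent (hp : 2 ≤ p) : -(1 / 2) ≤ ((p : ℝ) - 3) / 2 := by
  have : (2 : ℝ) ≤ p := by exact_mod_cast hp
  linarith

theorem c0_pos (hp : 2 ≤ p) : 0 < c0 p :=
  one_div_pos.mpr (integral_one_sub_sq_rpow_pos (neg_half_le_exponent hp))

theorem ae_abs_le_one_marginalLaw (p : ℕ) : ∀ᵐ s ∂marginalLaw p, |s| ≤ 1 := by
  refine (withDensity_absolutelyContinuous _ _).ae_le ?_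
  filter_upwards [ae_restrict_mem measurableSet_Ioc] with s hs using abs_le.mpr ⟨hs.1.le, hs.2⟩

theorem c0_mul_one_sub_sq_rpow_nonneg (hp : 2 ≤ p) {s : ℝ} (hs : s ∈ Set.Ioc (-1) 1) :
    0 ≤ c0 p * (1 - s ^ 2) ^ (((p : ℝ) - 3) / 2) := by
  have := c0_pos hp
  have : 0 ≤ 1 - s ^ 2 := by nlinarith [hs.1, hs.2]
  positivity

theorem integral_marginalLaw (hp : 2 ≤ p) (φ : ℝ → ℝ) :
    ∫ s, φ s ∂marginalLaw p =
      c0 p * ∫ s in (-1 : ℝ)..1, (1 - s ^ 2) ^ (((p : ℝ) - 3) / 2) * φ s := by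
  rw [marginalLaw, integral_withDensity_eq_integral_toReal_smul (by fun_prop) (by simp),
    intervalIntegral.integral_of_le (by norm_num), ← integral_const_mul]
  refine setIntegral_congr_fun measurableSet_Ioc fun s hs => ?_
  rw [ENNReal.toReal_ofReal (c0_mul_one_sub_sq_rpow_nonneg hp hs), smul_eq_mul, mul_assoc]

theorem isProbabilityMeasure_marginalLaw (hp : 2 ≤ p) : IsProbabilityMeasure (marginalLaw p) := by
  have hα := neg_half_le_exponent hp
  constructor
  rw [marginalLaw, withDensity_apply _ MeasurableSet.univ, Measure.restrict_univ,
    ← ofReal_integral_eq_lintegral_ofReal, integral_const_mul,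
    ← intervalIntegral.integral_of_le (by norm_num), c0,
    one_div_mul_cancel (integral_one_sub_sq_rpow_pos hα).ne', ENNReal.ofReal_one]
  · exact ((intervalIntegrable_iff_integrableOn_Ioc_of_le (by norm_num)).mp
      (intervalIntegrable_one_sub_sq_rpow hα)).const_mul _
  · filter_upwards [ae_restrict_mem measurableSet_Ioc] with s hs
    exact c0_mul_one_sub_sq_rpow_nonneg hp hs

theorem integral_pow_add_two_marginalLaw (hp : 2 ≤ p) (k : ℕ) :
    (k + p) * ∫ s, s ^ (k + 2) ∂marginalLaw p = (k + 1) * ∫ s, s ^ k ∂marginalLaw p := by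
  rw [integral_marginalLaw hp, integral_marginalLaw hp]
  linear_combination c0 p * integral_one_sub_sq_rpow_mul_pow_add_two (neg_half_le_exponent hp) k

theorem cKF_div_c0 (hp : 2 ≤ p) (κ : ℝ) (f : ℝ → ℝ) :
    cKF p κ f / c0 p = (∫ s, f (κ * s ^ 2) ∂marginalLaw p)⁻¹ := by
  rw [integral_marginalLaw hp, cKF, mul_inv, one_div, div_eq_mul_inv, mul_comm]

namespace IsUniformOnSphere

variable {ι : Type*} [Fintype ι] [DecidableEq ι] {U : Measure (ι → ℝ)} {θ : ι → ℝ}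

theorem ae_abs_dotProduct_le_one (hU : IsUniformOnSphere U) (hθ : θ ⬝ᵥ θ = 1) :
    ∀ᵐ y ∂U, |θ ⬝ᵥ y| ≤ 1 := by
  filter_upwards [hU.ae_dotProduct_self] with y hy
  rw [← sq_le_one_iff_abs_le_one]
  calc (θ ⬝ᵥ y) ^ 2 ≤ (∑ a, θ a ^ 2) * ∑ a, y a ^ 2 := Finset.sum_mul_sq_le_sq_mul_sq _ _ _
    _ = (θ ⬝ᵥ θ) * (y ⬝ᵥ y) := by simp only [dotProduct_self_eq_sum_sq]
    _ = 1 := by rw [hθ, hy, one_mul]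

theorem ae_abs_dotProduct_sq_le_one (hU : IsUniformOnSphere U) (hθ : θ ⬝ᵥ θ = 1) :
    ∀ᵐ y ∂U, |(θ ⬝ᵥ y) ^ 2| ≤ 1 := by
  filter_upwards [hU.ae_abs_dotProduct_le_one hθ] with y hy
  rwa [abs_sq, sq_le_one_iff_abs_le_one]

theorem map_dotProduct_eq_marginalLaw [IsProbabilityMeasure U] (hU : IsUniformOnSphere U)
    (hι : 2 ≤ Fintype.card ι) (hθ : θ ⬝ᵥ θ = 1) :
    U.map (θ ⬝ᵥ ·) = marginalLaw (Fintype.card ι) := by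
  have := isProbabilityMeasure_marginalLaw hι
  have hmeas : AEMeasurable (θ ⬝ᵥ ·) U := by fun_prop
  have hmap (k : ℕ) : ∫ s, s ^ k ∂U.map (θ ⬝ᵥ ·) = ∫ y, (θ ⬝ᵥ y) ^ k ∂U :=
    integral_map hmeas (by fun_prop)
  have hne (k : ℕ) : ((k : ℝ) + Fintype.card ι) ≠ 0 := by positivity
  refine ext_of_integral_pow_eq (R := 1)
    ((ae_map_iff hmeas (measurableSet_le (by fun_prop) (by fun_prop))).mpr
      (hU.ae_abs_dotProduct_le_one hθ)) (ae_abs_le_one_marginalLaw _) fun k => ?_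
  rw [hmap]
  induction k using Nat.twoStepInduction with
  | zero => simp
  | one => simp [hU.integral_dotProduct, integral_marginalLaw hι, integral_one_sub_sq_rpow_mul_self]
  | more k ih _ =>
    rw [← mul_right_inj' (hne k), hU.integral_dotProduct_pow_add_two hθ, ih,
      integral_pow_add_two_marginalLaw hι]

theorem cKF_div_c0_eq [IsProbabilityMeasure U] (hU : IsUniformOnSphere U)
    (hι : 2 ≤ Fintype.card ι) (hθ : θ ⬝ᵥ θ = 1) (κ : ℝ) {f : ℝ → ℝ} (hf : Measurable f) :
    cKF (Fintype.card ι) κ f / c0 (Fintype.card ι) = (∫ y, f (κ * (θ ⬝ᵥ y) ^ 2) ∂U)⁻¹ := by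
  rw [cKF_div_c0 hι, ← hU.map_dotProduct_eq_marginalLaw hι hθ,
    integral_map (by fun_prop) (Measurable.aestronglyMeasurable (by fun_prop))]

end IsUniformOnSphere

end MarginalLaw

section LocalAlternatives

variable {Ω : Type*} [MeasurableSpace Ω] {U : Measure Ω} {w φ : Ω → ℝ} {f : ℝ → ℝ} {R c : ℝ}
  {β : Type*} {l : Filter β} {κ : β → ℝ}

/-- The reweighting of `U` with density proportional to `f (κ w)`. It is meaningful when `f (κ w)`
is almost everywhere nonnegative with positive finite mean. -/
def reweight (U : Measure Ω) (f : ℝ → ℝ) (κ : ℝ) (w : Ω → ℝ) : Measure Ω :=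
  U.withDensity fun y => ENNReal.ofReal ((∫ z, f (κ * w z) ∂U)⁻¹ * f (κ * w y))

theorem eventually_forall_abs_le_of_tendsto_zero {P : ℝ → Prop} (hP : ∀ᶠ v in 𝓝 0, P v)
    (hκ : Tendsto κ l (𝓝 0)) (R : ℝ) : ∀ᶠ n in l, ∀ s, |s| ≤ R → P (κ n * s) := by
  obtain ⟨ε, hε, hball⟩ := Metric.eventually_nhds_iff.mp hP
  have hsmall : Tendsto (fun n => |κ n| * R) l (𝓝 0) := by simpa using hκ.abs.mul_const R
  filter_upwards [hsmall.eventually_lt_const hε] with n hn s hs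
  refine hball ?_
  rw [dist_zero_right, Real.norm_eq_abs, abs_mul]
  exact (mul_le_mul_of_nonneg_left hs (abs_nonneg _)).trans_lt hn

theorem eventually_norm_mul_comp_mul_le {g : ℝ → ℝ} (hwR : ∀ᵐ y ∂U, |w y| ≤ R)
    (hg : ContinuousAt g 0) (hκ : Tendsto κ l (𝓝 0)) (φ : Ω → ℝ) :
    ∀ᶠ n in l, ∀ᵐ y ∂U, ‖φ y * g (κ n * w y)‖ ≤ ‖φ y‖ * (|g 0| + 1) := by
  have hbound : ∀ᶠ v in 𝓝 0, |g v| ≤ |g 0| + 1 :=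
    (hg.abs.eventually_lt_const (lt_add_one _)).mono fun _ => le_of_lt
  filter_upwards [eventually_forall_abs_le_of_tendsto_zero hbound hκ R] with n hn
  filter_upwards [hwR] with y hy
  rw [norm_mul]
  exact mul_le_mul_of_nonneg_left (hn _ hy) (norm_nonneg _)

theorem eventually_integrable_mul_comp_mul (hw : Measurable w) (hwR : ∀ᵐ y ∂U, |w y| ≤ R)
    (hφ : Integrable φ U) {g : ℝ → ℝ} (hg : Measurable g) (hg0 : ContinuousAt g 0)
    (hκ : Tendsto κ l (𝓝 0)) : ∀ᶠ n in l, Integrable (fun y => φ y * g (κ n * w y)) U := by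
  filter_upwards [eventually_norm_mul_comp_mul_le hwR hg0 hκ φ] with n hn
  exact (hφ.norm.mul_const _).mono' (hφ.aestronglyMeasurable.mul
    (Measurable.aestronglyMeasurable (by fun_prop))) hn

theorem tendsto_integral_mul_comp_mul [l.IsCountablyGenerated] (hw : Measurable w)
    (hwR : ∀ᵐ y ∂U, |w y| ≤ R) (hφ : Integrable φ U) {g : ℝ → ℝ} (hg : Measurable g)
    (hg0 : ContinuousAt g 0) (hκ : Tendsto κ l (𝓝 0)) :
    Tendsto (fun n => ∫ y, φ y * g (κ n * w y) ∂U) l (𝓝 (g 0 * ∫ y, φ y ∂U)) := by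
  rw [mul_comm, ← integral_mul_const]
  refine tendsto_integral_filter_of_dominated_convergence (fun y => ‖φ y‖ * (|g 0| + 1))
    (.of_forall fun n => hφ.aestronglyMeasurable.mul
      (Measurable.aestronglyMeasurable (by fun_prop)))
    (eventually_norm_mul_comp_mul_le hwR hg0 hκ φ) (hφ.norm.mul_const _)
    (.of_forall fun y => (hg0.tendsto.comp ?_).const_mul _)
  simpa using hκ.mul_const (w y)

theorem measurable_dslope (hf : Measurable f) (a : ℝ) : Measurable (dslope f a) := by
  have hite : dslope f a = fun b => if b = a then deriv f a else (f b - f a) / (b - a) := by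
    ext b
    by_cases hb : b = a <;> simp [hb, dslope_of_ne, slope_def_field]
  rw [hite]
  exact Measurable.ite (measurableSet_singleton a) measurable_const (by fun_prop)

theorem tendsto_mul_integral_mul_comp_mul [l.IsCountablyGenerated] (hw : Measurable w)
    (hwR : ∀ᵐ y ∂U, |w y| ≤ R) (hφ : Integrable φ U) (hφ0 : ∫ y, φ y ∂U = 0) (hf : Measurable f)
    (hf0 : DifferentiableAt ℝ f 0) (hκ : Tendsto κ l (𝓝 0)) {r : β → ℝ}
    (hr : Tendsto (fun n => r n * κ n) l (𝓝 c)) :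
    Tendsto (fun n => r n * ∫ y, φ y * f (κ n * w y) ∂U) l
      (𝓝 (c * (deriv f 0 * ∫ y, φ y * w y ∂U))) := by
  have hφw : Integrable (fun y => φ y * w y) U := hφ.mul_bdd hw.aestronglyMeasurable hwR
  have hslope := measurable_dslope hf 0
  have hslope0 := continuousAt_dslope_same.mpr hf0
  have hlim := hr.mul (tendsto_integral_mul_comp_mul hw hwR hφw hslope hslope0 hκ)
  rw [dslope_same] at hlim
  refine hlim.congr' ?_
  filter_upwards [eventually_integrable_mul_comp_mul hw hwR hφw hslope hslope0 hκ] with n hn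
  have hexpand (y : Ω) : φ y * f (κ n * w y) =
      f 0 * φ y + κ n * (φ y * w y * dslope f 0 (κ n * w y)) := by
    have h := sub_smul_dslope f 0 (κ n * w y)
    simp only [sub_zero, smul_eq_mul] at h
    linear_combination -φ y * h
  simp_rw [hexpand]
  rw [integral_add (hφ.const_mul _) (hn.const_mul _), integral_const_mul, integral_const_mul, hφ0]
  ring

section Reweight

variable [IsProbabilityMeasure U] [l.IsCountablyGenerated]

theorem tendsto_integral_comp_mul (hw : Measurable w)
    (hwR : ∀ᵐ y ∂U, |w y| ≤ R) (hf : Measurable f) (hfc : ContinuousAt f 0)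
    (hκ : Tendsto κ l (𝓝 0)) :
    Tendsto (fun n => ∫ y, f (κ n * w y) ∂U) l (𝓝 (f 0)) := by
  simpa using tendsto_integral_mul_comp_mul hw hwR (integrable_const (1 : ℝ)) hf hfc hκ

theorem eventually_ae_density_nonneg (hw : Measurable w)
    (hwR : ∀ᵐ y ∂U, |w y| ≤ R) (hf : Measurable f) (hf0 : f 0 = 1) (hfc : ContinuousAt f 0)
    (hκ : Tendsto κ l (𝓝 0)) :
    ∀ᶠ n in l, ∀ᵐ y ∂U, 0 ≤ (∫ z, f (κ n * w z) ∂U)⁻¹ * f (κ n * w y) := by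
  have hone : 0 < f 0 := hf0 ▸ one_pos
  have hpos : ∀ᶠ v in 𝓝 0, 0 < f v := hfc.eventually_const_lt hone
  filter_upwards [eventually_forall_abs_le_of_tendsto_zero hpos hκ R,
    (tendsto_integral_comp_mul hw hwR hf hfc hκ).eventually_const_lt hone]
    with n hn hmass
  filter_upwards [hwR] with y hy
  have := hn _ hy
  positivity

theorem eventually_isProbabilityMeasure_reweight (hw : Measurable w)
    (hwR : ∀ᵐ y ∂U, |w y| ≤ R) (hf : Measurable f) (hf0 : f 0 = 1) (hfc : ContinuousAt f 0)
    (hκ : Tendsto κ l (𝓝 0)) : ∀ᶠ n in l, IsProbabilityMeasure (reweight U f (κ n) w) := by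
  filter_upwards [eventually_ae_density_nonneg hw hwR hf hf0 hfc hκ,
    eventually_integrable_mul_comp_mul hw hwR (integrable_const (1 : ℝ)) hf hfc hκ,
    (tendsto_integral_comp_mul hw hwR hf hfc hκ).eventually_ne (hf0 ▸ one_ne_zero : f 0 ≠ 0)]
    with n hnonneg hint hmass
  simp only [one_mul] at hint
  constructor
  rw [reweight, withDensity_apply _ MeasurableSet.univ, Measure.restrict_univ,
    ← ofReal_integral_eq_lintegral_ofReal (hint.const_mul _) hnonneg, integral_const_mul,
    inv_mul_cancel₀ hmass, ENNReal.ofReal_one]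

theorem eventually_integral_reweight (hw : Measurable w)
    (hwR : ∀ᵐ y ∂U, |w y| ≤ R) (hf : Measurable f) (hf0 : f 0 = 1) (hfc : ContinuousAt f 0)
    (hκ : Tendsto κ l (𝓝 0)) (φ : Ω → ℝ) :
    ∀ᶠ n in l, ∫ y, φ y ∂reweight U f (κ n) w =
      (∫ y, f (κ n * w y) ∂U)⁻¹ * ∫ y, φ y * f (κ n * w y) ∂U := by
  filter_upwards [eventually_ae_density_nonneg hw hwR hf hf0 hfc hκ] with n hnonneg
  rw [reweight, integral_withDensity_eq_integral_toReal_smul (by fun_prop) (by simp),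
    ← integral_const_mul]
  refine integral_congr_ae ?_
  filter_upwards [hnonneg] with y hy
  rw [ENNReal.toReal_ofReal hy, smul_eq_mul]
  ring

theorem tendsto_integral_reweight (hw : Measurable w)
    (hwR : ∀ᵐ y ∂U, |w y| ≤ R) (hf : Measurable f) (hf0 : f 0 = 1) (hfc : ContinuousAt f 0)
    (hκ : Tendsto κ l (𝓝 0)) (hφ : Integrable φ U) :
    Tendsto (fun n => ∫ y, φ y ∂reweight U f (κ n) w) l (𝓝 (∫ y, φ y ∂U)) := by
  have hmass := (tendsto_integral_comp_mul hw hwR hf hfc hκ).inv₀ (by simp [hf0])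
  have hlim := hmass.mul (tendsto_integral_mul_comp_mul hw hwR hφ hf hfc hκ)
  simp only [hf0, inv_one, one_mul] at hlim
  exact hlim.congr' ((eventually_integral_reweight hw hwR hf hf0 hfc hκ φ).mono fun _ => Eq.symm)

theorem tendsto_mul_integral_reweight (hw : Measurable w)
    (hwR : ∀ᵐ y ∂U, |w y| ≤ R) (hf : Measurable f) (hf0 : f 0 = 1) (hf' : HasDerivAt f 1 0)
    (hκ : Tendsto κ l (𝓝 0)) (hφ : Integrable φ U) (hφ0 : ∫ y, φ y ∂U = 0) {r : β → ℝ}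
    (hr : Tendsto (fun n => r n * κ n) l (𝓝 c)) :
    Tendsto (fun n => r n * ∫ y, φ y ∂reweight U f (κ n) w) l (𝓝 (c * ∫ y, φ y * w y ∂U)) := by
  have hfc := hf'.continuousAt
  have hmass := (tendsto_integral_comp_mul hw hwR hf hfc hκ).inv₀ (by simp [hf0])
  have hlim := hmass.mul
    (tendsto_mul_integral_mul_comp_mul hw hwR hφ hφ0 hf hf'.differentiableAt hκ hr)
  simp only [hf0, hf'.deriv, inv_one, one_mul] at hlim
  refine hlim.congr' ?_
  filter_upwards [eventually_integral_reweight hw hwR hf hf0 hfc hκ φ] with n hn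
  rw [hn]
  ring

end Reweight

end LocalAlternatives

section CentralLimit

variable {E : Type*} [NormedAddCommGroup E] [InnerProductSpace ℝ E] [MeasurableSpace E]
  [BorelSpace E]

theorem norm_cexp_ofReal_mul_I_sub_le (s : ℝ) :
    ‖Complex.exp (s * Complex.I) - (1 + s * Complex.I - s ^ 2 / 2)‖ ≤ |s| ^ 3 * exp |s| := by
  have h := Complex.norm_exp_sub_sum_le_norm_mul_exp (s * Complex.I) 3
  simp only [norm_mul, Complex.norm_real, Complex.norm_I, mul_one, Real.norm_eq_abs] at h
  convert h using 3
  simp [Finset.sum_range_succ, mul_pow]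
  ring

section Taylor

variable [SecondCountableTopology E] {ν : Measure E} [IsProbabilityMeasure ν] {B : ℝ}

theorem norm_charFun_sub_le (hB : ∀ᵐ x ∂ν, ‖x‖ ≤ B) (t : E) :
    ‖charFun ν t - (1 + (∫ x, inner ℝ x t ∂ν) * Complex.I - (∫ x, inner ℝ x t ^ 2 ∂ν) / 2)‖
      ≤ (B * ‖t‖) ^ 3 * exp (B * ‖t‖) := by
  have hbound : ∀ᵐ x ∂ν, |inner ℝ x t| ≤ B * ‖t‖ := hB.mono fun x hx =>
    (abs_real_inner_le_norm x t).trans (by gcongr)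
  have hint : Integrable (fun x => inner ℝ x t) ν :=
    .of_bound (Measurable.aestronglyMeasurable (by fun_prop)) _ hbound
  have hint2 : Integrable (fun x => inner ℝ x t ^ 2) ν := by
    simp_rw [sq]
    exact hint.mul_bdd hint.aestronglyMeasurable hbound
  have hexp : Integrable (fun x => Complex.exp (inner ℝ x t * Complex.I)) ν :=
    .of_bound (Measurable.aestronglyMeasurable (by fun_prop)) 1
      (.of_forall fun x => (Complex.norm_exp_ofReal_mul_I _).le)
  have hlin := hint.ofReal (𝕜 := ℂ) |>.mul_const Complex.I
  have hquad := hint2.ofReal (𝕜 := ℂ) |>.div_const 2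
  have hone : Integrable (fun _ => (1 : ℂ)) ν := integrable_const 1
  calc _ = ‖∫ x, (Complex.exp (inner ℝ x t * Complex.I) - (1 + inner ℝ x t * Complex.I
          - ((inner ℝ x t ^ 2 : ℝ) : ℂ) / 2)) ∂ν‖ := by
        rw [integral_sub hexp (by exact (hone.add hlin).sub hquad),
          integral_sub (by exact hone.add hlin) (by exact hquad), integral_add hone (by exact hlin),
          integral_mul_const, integral_div, integral_complex_ofReal, integral_complex_ofReal,
          charFun_apply, integral_const, probReal_univ, one_smul]
    _ ≤ (B * ‖t‖) ^ 3 * exp (B * ‖t‖) * ν.real Set.univ :=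
        norm_integral_le_of_norm_le_const <| hbound.mono fun x hx => by
          rw [Complex.ofReal_pow]
          have := (abs_nonneg _).trans hx
          exact (norm_cexp_ofReal_mul_I_sub_le _).trans (by gcongr)
    _ = _ := by rw [probReal_univ, mul_one]

end Taylor

theorem charFun_map_inv_sqrt_smul_sum_pi [SecondCountableTopology E] [CompleteSpace E]
    (ν : Measure E) [IsProbabilityMeasure ν] (n : ℕ) (t : E) :
    charFun ((Measure.pi fun _ : Fin n => ν).map fun x => (√n)⁻¹ • ∑ i, x i) t
      = charFun ν ((√n)⁻¹ • t) ^ n := by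
  rw [charFun_map_smul_comp (by fun_prop), charFun_map_sum_pi_eq_prod]
  simp

variable {ν : ℕ → Measure E} {B : ℝ} {m : E}

theorem tendsto_nat_mul_charFun_sub_one [SecondCountableTopology E]
    (hν : ∀ᶠ n in atTop, IsProbabilityMeasure (ν n)) (hB : ∀ n, ∀ᵐ x ∂ν n, ‖x‖ ≤ B) {t : E}
    (hmean : Tendsto (fun n : ℕ => √n * ∫ x, inner ℝ x t ∂ν n) atTop (𝓝 (inner ℝ m t)))
    (hvar : Tendsto (fun n => ∫ x, inner ℝ x t ^ 2 ∂ν n) atTop (𝓝 (‖t‖ ^ 2))) :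
    Tendsto (fun n : ℕ => n * (charFun (ν n) ((√n)⁻¹ • t) - 1)) atTop
      (𝓝 (inner ℝ m t * Complex.I - ‖t‖ ^ 2 / 2)) := by
  have hmain := ((Complex.continuous_ofReal.tendsto _).comp hmean |>.mul_const Complex.I).sub
    ((Complex.continuous_ofReal.tendsto _).comp hvar |>.div_const 2)
  have hsqrt : Tendsto (fun n : ℕ => (√n)⁻¹) atTop (𝓝 0) :=
    (tendsto_sqrt_atTop.comp tendsto_natCast_atTop_atTop).inv_tendsto_atTop
  have herr : Tendsto (fun n : ℕ => (√n)⁻¹ * ((B * ‖t‖) ^ 3 * exp ((√n)⁻¹ * (B * ‖t‖)))) atTop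
      (𝓝 0) := by
    simpa using hsqrt.mul (((hsqrt.mul_const (B * ‖t‖)).rexp).const_mul ((B * ‖t‖) ^ 3))
  rw [Complex.ofReal_pow] at hmain
  refine hmain.congr_dist (squeeze_zero' (.of_forall fun _ => dist_nonneg) ?_ herr)
  filter_upwards [hν, eventually_ne_atTop 0] with n hn hn0
  have hr : (0 : ℝ) < √n := by positivity
  have hn_eq : (n : ℝ) = √n ^ 2 := (sq_sqrt n.cast_nonneg).symm
  have hn_eqC : (n : ℂ) = (√n : ℂ) ^ 2 := by exact_mod_cast hn_eq
  have hrC : (√n : ℂ) ≠ 0 := by exact_mod_cast hr.ne'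
  have h := norm_charFun_sub_le (hB n) ((√n)⁻¹ • t)
  simp_rw [inner_smul_right, mul_pow, integral_const_mul, norm_smul, norm_inv, Real.norm_eq_abs,
    abs_of_pos hr] at h
  calc _ = ‖(n : ℂ) * (charFun (ν n) ((√n)⁻¹ • t) - (1 + ((√n)⁻¹ * ∫ x, inner ℝ x t ∂ν n : ℝ)
          * Complex.I - ((√n)⁻¹ ^ 2 * ∫ x, inner ℝ x t ^ 2 ∂ν n : ℝ) / 2))‖ := by
        rw [dist_comm, dist_eq_norm, hn_eqC]
        congr 1
        simp only [Function.comp_apply, Complex.ofReal_mul, Complex.ofReal_inv, Complex.ofReal_pow]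
        field_simp
        ring
    _ ≤ √n ^ 2 * ((B * ((√n)⁻¹ * ‖t‖)) ^ 3 * exp (B * ((√n)⁻¹ * ‖t‖))) := by
        rw [norm_mul, Complex.norm_natCast, ← hn_eq]
        gcongr
        simpa only [mul_pow] using h
    _ = _ := by
        rw [show B * ((√n)⁻¹ * ‖t‖) = (√n)⁻¹ * (B * ‖t‖) by ring]
        field_simp

theorem tendsto_integral_of_tendsto_charFun [FiniteDimensional ℝ E]
    (hν : ∀ᶠ n in atTop, IsProbabilityMeasure (ν n)) {ν₀ : Measure E} [IsProbabilityMeasure ν₀]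
    (hchar : ∀ t, Tendsto (fun n => charFun (ν n) t) atTop (𝓝 (charFun ν₀ t)))
    (g : BoundedContinuousFunction E ℝ) :
    Tendsto (fun n => ∫ x, g x ∂ν n) atTop (𝓝 (∫ x, g x ∂ν₀)) := by
  obtain ⟨N, hN⟩ := eventually_atTop.mp hν
  let P (n : ℕ) : ProbabilityMeasure E := ⟨ν (n + N), hN _ (Nat.le_add_left N n)⟩
  have hP : Tendsto P atTop (𝓝 ⟨ν₀, inferInstance⟩) :=
    ProbabilityMeasure.tendsto_iff_tendsto_charFun.mpr fun t =>
      (hchar t).comp (tendsto_add_atTop_nat N)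
  exact (tendsto_add_atTop_iff_nat N).mp
    (ProbabilityMeasure.tendsto_iff_forall_integral_tendsto.mp hP g)

theorem tendsto_integral_inv_sqrt_smul_sum_pi [FiniteDimensional ℝ E]
    (hν : ∀ᶠ n in atTop, IsProbabilityMeasure (ν n)) (hB : ∀ n, ∀ᵐ x ∂ν n, ‖x‖ ≤ B)
    (hmean : ∀ t, Tendsto (fun n : ℕ => √n * ∫ x, inner ℝ x t ∂ν n) atTop (𝓝 (inner ℝ m t)))
    (hvar : ∀ t, Tendsto (fun n => ∫ x, inner ℝ x t ^ 2 ∂ν n) atTop (𝓝 (‖t‖ ^ 2)))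
    (g : BoundedContinuousFunction E ℝ) :
    Tendsto (fun n : ℕ => ∫ x, g ((√n)⁻¹ • ∑ i, x i) ∂Measure.pi fun _ : Fin n => ν n) atTop
      (𝓝 (∫ z, g (z + m) ∂stdGaussian E)) := by
  have hlim := tendsto_integral_of_tendsto_charFun (ν₀ := (stdGaussian E).map (· + m))
    (ν := fun n => (Measure.pi fun _ : Fin n => ν n).map fun x => (√n)⁻¹ • ∑ i, x i)
    (hν.mono fun n hn => Measure.isProbabilityMeasure_map (by fun_prop)) (fun t => ?_) g
  · rw [integral_map (by fun_prop) (by fun_prop)] at hlim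
    refine hlim.congr fun n => integral_map (by fun_prop) (by fun_prop)
  · have hpow := Complex.tendsto_one_add_pow_exp_of_tendsto
      (tendsto_nat_mul_charFun_sub_one hν hB (hmean t) (hvar t))
    rw [charFun_map_add_const, charFun_stdGaussian, ← Complex.exp_add, neg_div,
      neg_add_eq_sub]
    refine hpow.congr' (hν.mono fun n hn => ?_)
    simp only [charFun_map_inv_sqrt_smul_sum_pi, add_sub_cancel]

end CentralLimit

section SymmTraceless

variable {ι : Type*} [Fintype ι]

/-- The space of symmetric traceless matrices, whose inner product is the Frobenius one because
matrices are encoded as vectors indexed by pairs. -/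
def symmTraceless (ι : Type*) [Fintype ι] : Submodule ℝ (EuclideanSpace ℝ (ι × ι)) where
  carrier := {T | (∀ a b, T (a, b) = T (b, a)) ∧ ∑ a, T (a, a) = 0}
  add_mem' hS hT := ⟨fun a b => congrArg₂ (· + ·) (hS.1 a b) (hT.1 a b), by
    simp [Finset.sum_add_distrib, hS.2, hT.2]⟩
  zero_mem' := by simp
  smul_mem' c T hT := ⟨fun a b => congrArg (c * ·) (hT.1 a b), by
    simp [← Finset.mul_sum, hT.2]⟩

/-- The sum of the diagonal entries of a symmetric matrix, given by its entries on unordered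
pairs. -/
def sym2Trace (ι : Type*) [Fintype ι] : Module.Dual ℝ (Sym2 ι → ℝ) :=
  ∑ a, LinearMap.proj s(a, a)

theorem sym2Trace_apply (v : Sym2 ι → ℝ) : sym2Trace ι v = ∑ a, v s(a, a) := by
  simp [sym2Trace]

/-- A symmetric traceless matrix is determined by its entries on unordered pairs. -/
def symmTracelessEquivKer (ι : Type*) [Fintype ι] :
    LinearMap.ker (sym2Trace ι) ≃ₗ[ℝ] symmTraceless ι where
  toFun v := ⟨WithLp.toLp 2 fun ab => v.1 s(ab.1, ab.2), fun a b => by simp [Sym2.eq_swap],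
    (sym2Trace_apply v.1).symm.trans v.2⟩
  map_add' _ _ := rfl
  map_smul' _ _ := rfl
  invFun T := ⟨Sym2.lift ⟨fun a b => T.1 (a, b), T.2.1⟩, by
    simpa [sym2Trace_apply] using T.2.2⟩
  left_inv v := Subtype.ext (funext fun s => s.inductionOn fun a b => rfl)
  right_inv T := rfl

theorem finrank_symmTraceless [Nonempty ι] :
    Module.finrank ℝ (symmTraceless ι) = Fintype.card ι * (Fintype.card ι + 1) / 2 - 1 := by
  classical
  have htrace : sym2Trace ι ≠ 0 := fun h => by
    simpa [sym2Trace_apply] using LinearMap.congr_fun h fun _ => 1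
  have hker := Module.Dual.finrank_ker_add_one_of_ne_zero htrace
  rw [(symmTracelessEquivKer ι).finrank_eq, Module.finrank_fintype_fun_eq_card, Sym2.card,
    Nat.choose_two_right, Nat.add_sub_cancel, mul_comm] at hker
  exact Nat.eq_sub_of_add_eq hker

namespace symmTraceless

/-- The matrix encoded by an element of `symmTraceless ι`. -/
def toMatrix (T : symmTraceless ι) : Matrix ι ι ℝ := Matrix.of fun a b => T.1 (a, b)

theorem transpose_toMatrix (T : symmTraceless ι) : (toMatrix T)ᵀ = toMatrix T :=
  Matrix.ext fun a b => T.2.1 b a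

theorem trace_toMatrix (T : symmTraceless ι) : (toMatrix T).trace = 0 := T.2.2

/-- The orthogonal projection of a matrix onto the symmetric traceless ones. -/
def part (ι : Type*) [Fintype ι] : Matrix ι ι ℝ →ₗ[ℝ] symmTraceless ι :=
  (symmTraceless ι).orthogonalProjectionOnto.toLinearMap ∘ₗ
    { toFun A := WithLp.toLp 2 fun ab => A ab.1 ab.2
      map_add' _ _ := rfl
      map_smul' _ _ := rfl }

theorem inner_eq_trace (S T : symmTraceless ι) :
    inner ℝ S T = (toMatrix S * toMatrix T).trace := by
  simp [PiLp.inner_apply, Fintype.sum_prod_type, trace, mul_apply, toMatrix, T.2.1, mul_comm]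

theorem inner_part (A : Matrix ι ι ℝ) (T : symmTraceless ι) :
    inner ℝ (part ι A) T = (A * toMatrix T).trace := by
  have h : inner ℝ (part ι A) T = inner ℝ (WithLp.toLp 2 fun ab : ι × ι => A ab.1 ab.2) T.1 :=
    Submodule.inner_orthogonalProjectionOnto_eq_of_mem_right T _
  simp [h, PiLp.inner_apply, Fintype.sum_prod_type, trace, mul_apply, toMatrix, T.2.1, mul_comm]

theorem inner_part_vecMulVec (y : ι → ℝ) (T : symmTraceless ι) :
    inner ℝ (part ι (vecMulVec y y)) T = y ⬝ᵥ toMatrix T *ᵥ y := by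
  rw [inner_part, vecMulVec_mul, trace_vecMulVec, dotProduct_comm, dotProduct_mulVec]

theorem toMatrix_part [DecidableEq ι] [Nonempty ι] {A : Matrix ι ι ℝ} (hA : Aᵀ = A) :
    toMatrix (part ι A) = A - (A.trace / Fintype.card ι) • (1 : Matrix ι ι ℝ) := by
  let T : symmTraceless ι :=
    ⟨WithLp.toLp 2 fun ab => (A - (A.trace / Fintype.card ι) • (1 : Matrix ι ι ℝ)) ab.1 ab.2,
      fun a b => by simp [one_apply, eq_comm, ← congrFun₂ hA a b],
      (trace_sub _ _).trans (by simp)⟩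
  suffices part ι A = T from congrArg toMatrix this
  refine ext_inner_right ℝ fun S => ?_
  have hT : toMatrix T = A - (A.trace / Fintype.card ι) • (1 : Matrix ι ι ℝ) := rfl
  rw [inner_part, inner_eq_trace, hT, sub_mul, trace_sub, smul_mul_assoc, one_mul, trace_smul,
    trace_toMatrix, smul_zero, sub_zero]

theorem norm_part_sq [Nonempty ι] {A : Matrix ι ι ℝ} (hA : Aᵀ = A) :
    ‖part ι A‖ ^ 2 = (A * A).trace - A.trace ^ 2 / Fintype.card ι := by
  classical
  rw [← real_inner_self_eq_norm_sq, inner_part, toMatrix_part hA, mul_sub, trace_sub,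
    mul_smul_comm, mul_one, trace_smul, smul_eq_mul]
  ring

end symmTraceless

end SymmTraceless

section Score

variable {ι : Type*} [Fintype ι]

open symmTraceless

/-- The standardized second-order score of a point of the sphere: the Bingham statistic is the
squared norm of the normalized sum of the scores. -/
def binghamScore (y : ι → ℝ) : symmTraceless ι :=
  √(Fintype.card ι * (Fintype.card ι + 2) / 2) • part ι (vecMulVec y y)

theorem inner_binghamScore (y : ι → ℝ) (T : symmTraceless ι) :
    inner ℝ (binghamScore y) T =
      √(Fintype.card ι * (Fintype.card ι + 2) / 2) * (y ⬝ᵥ toMatrix T *ᵥ y) := by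
  rw [binghamScore, real_inner_smul_left (part ι _), inner_part_vecMulVec]

theorem continuous_binghamScore : Continuous (binghamScore (ι := ι)) := by
  have hpart := (part ι).continuous_of_finiteDimensional
  unfold binghamScore
  fun_prop

theorem norm_binghamScore_sq [Nonempty ι] {y : ι → ℝ} (hy : y ⬝ᵥ y = 1) :
    ‖binghamScore y‖ ^ 2 = (Fintype.card ι + 2) * (Fintype.card ι - 1) / 2 := by
  have hcard : (Fintype.card ι : ℝ) ≠ 0 := by simp
  rw [binghamScore, norm_smul, mul_pow, norm_part_sq (transpose_vecMulVec y y),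
    vecMulVec_mul_vecMulVec, hy, Real.norm_of_nonneg (sqrt_nonneg _), sq_sqrt (by positivity)]
  simp [hy]
  field_simp

theorem Sn_eq_smul_sum_vecMulVec {p n : ℕ} (x : Fin n → Fin p → ℝ) :
    Sn p n x = (n : ℝ)⁻¹ • ∑ i, vecMulVec (x i) (x i) := by
  ext a b
  simp [Sn, Matrix.sum_apply, vecMulVec_apply]

theorem trace_Sn {p n : ℕ} (hn : n ≠ 0) {x : Fin n → Fin p → ℝ} (hx : ∀ i, x i ⬝ᵥ x i = 1) :
    (Sn p n x).trace = 1 := by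
  simp [Sn_eq_smul_sum_vecMulVec, hx, hn]

theorem norm_inv_sqrt_smul_sum_binghamScore_sq {p n : ℕ} [NeZero p] (hn : n ≠ 0)
    {x : Fin n → Fin p → ℝ} (hx : ∀ i, x i ⬝ᵥ x i = 1) :
    ‖(√n)⁻¹ • ∑ i, binghamScore (x i)‖ ^ 2 =
      n * p * (p + 2) / 2 * ((Sn p n x * Sn p n x).trace - 1 / p) := by
  have hn' : (n : ℝ) ≠ 0 := by simpa
  have hsymm : (Sn p n x)ᵀ = Sn p n x := by
    simp [Sn_eq_smul_sum_vecMulVec, transpose_sum, transpose_vecMulVec]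
  have hsum : ∑ i, binghamScore (x i) = (√(p * (p + 2) / 2) * n) • part (Fin p) (Sn p n x) := by
    simp_rw [binghamScore, ← Finset.smul_sum, ← map_sum, mul_smul, ← map_smul,
      Sn_eq_smul_sum_vecMulVec, smul_inv_smul₀ hn', Fintype.card_fin]
  rw [hsum, smul_smul, norm_smul, mul_pow, norm_part_sq hsymm, trace_Sn hn hx, Real.norm_eq_abs,
    sq_abs, mul_pow, mul_pow, inv_pow, sq_sqrt (by positivity), sq_sqrt (by positivity)]
  simp only [Fintype.card_fin]
  field_simp

namespace IsUniformOnSphere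

variable [DecidableEq ι] {U : Measure (ι → ℝ)} [IsProbabilityMeasure U]

theorem integral_inner_binghamScore [Nonempty ι] (hU : IsUniformOnSphere U) (T : symmTraceless ι) :
    ∫ y, inner ℝ (binghamScore y) T ∂U = 0 := by
  have h := hU.integral_quadForm (toMatrix T)
  rw [trace_toMatrix, mul_zero] at h
  simp_rw [inner_binghamScore, integral_const_mul]
  rw [(mul_eq_zero.mp h).resolve_left (by simp), mul_zero]

theorem integral_inner_binghamScore_sq (hU : IsUniformOnSphere U) (T : symmTraceless ι) :
    ∫ y, inner ℝ (binghamScore y) T ^ 2 ∂U = ‖T‖ ^ 2 := by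
  have h := hU.integral_quadForm_mul_quadForm (toMatrix T) (transpose_toMatrix T)
  rw [trace_toMatrix, probReal_univ, ← inner_eq_trace, real_inner_self_eq_norm_sq] at h
  simp_rw [inner_binghamScore, mul_pow, integral_const_mul, sq (_ ⬝ᵥ _)]
  rw [sq_sqrt (by positivity)]
  linarith

theorem integral_inner_binghamScore_mul_sq (hU : IsUniformOnSphere U) (θ : ι → ℝ)
    (T : symmTraceless ι) :
    Fintype.card ι * (Fintype.card ι + 2) *
        ∫ y, inner ℝ (binghamScore y) T * (θ ⬝ᵥ y) ^ 2 ∂U = 2 * inner ℝ (binghamScore θ) T := by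
  have hsq (y : ι → ℝ) : y ⬝ᵥ vecMulVec θ θ *ᵥ y = (θ ⬝ᵥ y) ^ 2 := by
    rw [vecMulVec_mulVec, sq, dotProduct_comm y]
    simp
  have h := hU.integral_quadForm_mul_quadForm (toMatrix T) (transpose_vecMulVec θ θ)
  rw [trace_toMatrix, probReal_univ, trace_mul_comm, ← inner_part, inner_part_vecMulVec] at h
  simp_rw [hsq] at h
  simp_rw [inner_binghamScore, mul_assoc, integral_const_mul]
  linear_combination √(Fintype.card ι * (Fintype.card ι + 2) / 2) * h

end IsUniformOnSphere

end Score

section NoncentralChiSquare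

variable {E : Type*} [NormedAddCommGroup E] [InnerProductSpace ℝ E] [FiniteDimensional ℝ E]

theorem exists_linearIsometryEquiv_apply_eq {F : Type*} [NormedAddCommGroup F]
    [InnerProductSpace ℝ F] [FiniteDimensional ℝ F]
    (hdim : Module.finrank ℝ E = Module.finrank ℝ F) {m : E} {μ : F} (h : ‖m‖ = ‖μ‖) :
    ∃ J : E ≃ₗᵢ[ℝ] F, J m = μ := by
  let J : E ≃ₗᵢ[ℝ] F :=
    (stdOrthonormalBasis ℝ E).equiv (stdOrthonormalBasis ℝ F) (finCongr hdim)
  exact ⟨J.trans (ℝ ∙ (J m - μ))ᗮ.reflection, Submodule.reflection_sub (by simpa using h)⟩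

theorem map_norm_add_sq_stdGaussian [MeasurableSpace E] [BorelSpace E] {ι : Type*} [Fintype ι]
    (hdim : Module.finrank ℝ E = Fintype.card ι) {m : E} {μ : ι → ℝ}
    (h : ‖m‖ ^ 2 = ∑ i, μ i ^ 2) :
    (stdGaussian E).map (fun z => ‖z + m‖ ^ 2)
      = (Measure.pi fun _ : ι => gaussianReal 0 1).map fun z => ∑ i, (z i + μ i) ^ 2 := by
  have hnorm : ‖m‖ = ‖WithLp.toLp 2 μ‖ := by
    rw [EuclideanSpace.norm_eq, ← sqrt_sq (norm_nonneg m), h]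
    simp
  obtain ⟨J, hJ⟩ := exists_linearIsometryEquiv_apply_eq (by simpa using hdim) hnorm
  calc (stdGaussian E).map (fun z => ‖z + m‖ ^ 2)
      = (stdGaussian E).map ((fun z => ‖z + WithLp.toLp 2 μ‖ ^ 2) ∘ J) := by
        congr with z
        rw [Function.comp_apply, ← hJ, ← map_add, J.norm_map]
    _ = (stdGaussian (EuclideanSpace ℝ ι)).map fun z => ‖z + WithLp.toLp 2 μ‖ ^ 2 := by
        rw [← Measure.map_map (by fun_prop) (by fun_prop), stdGaussian_map]
    _ = _ := by
        rw [← map_pi_eq_stdGaussian, Measure.map_map (by fun_prop) (by fun_prop)]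
        congr with z
        simp [EuclideanSpace.norm_sq_eq]

theorem integral_comp_norm_add_sq_stdGaussian [MeasurableSpace E] [BorelSpace E] {ι : Type*}
    [Fintype ι] (hdim : Module.finrank ℝ E = Fintype.card ι) {m : E} {μ : ι → ℝ}
    (h : ‖m‖ ^ 2 = ∑ i, μ i ^ 2) {g : ℝ → ℝ} (hg : StronglyMeasurable g) :
    ∫ z, g (‖z + m‖ ^ 2) ∂stdGaussian E =
      ∫ z, g (∑ i, (z i + μ i) ^ 2) ∂Measure.pi fun _ : ι => gaussianReal 0 1 := by
  rw [← integral_map (f := g) (by fun_prop) hg.aestronglyMeasurable,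
    map_norm_add_sq_stdGaussian hdim h,
    integral_map (Measurable.aemeasurable (by fun_prop)) hg.aestronglyMeasurable]

end NoncentralChiSquare

theorem tendsto_sqrt_mul_mul_div_sqrt {τseq : ℕ → ℝ} {τ : ℝ}
    (hτ : Tendsto τseq atTop (𝓝 τ)) (b : ℝ) :
    Tendsto (fun n : ℕ => √n * (τseq n * b / √n)) atTop (𝓝 (τ * b)) := by
  refine (hτ.mul_const b).congr' ?_
  filter_upwards [eventually_ne_atTop 0] with n hn
  rw [mul_div_cancel₀ _ (by positivity)]

theorem tendsto_zero_of_tendsto_sqrt_mul {κ : ℕ → ℝ} {c : ℝ}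
    (hκ : Tendsto (fun n : ℕ => √n * κ n) atTop (𝓝 c)) : Tendsto κ atTop (𝓝 0) := by
  have hsqrt : Tendsto (fun n : ℕ => √n) atTop atTop :=
    tendsto_sqrt_atTop.comp tendsto_natCast_atTop_atTop
  refine (hκ.div_atTop hsqrt).congr' ?_
  filter_upwards [eventually_ne_atTop 0] with n hn
  rw [mul_div_cancel_left₀ _ (by positivity)]

section ScoreLimit

variable {ι : Type*} [Fintype ι] {U : Measure (ι → ℝ)} {θ : ι → ℝ}

/-- The asymptotic shift of the normalized sum of the scores when the concentration in the
direction `θ` is `c / √n`. -/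
def scoreShift (c : ℝ) (θ : ι → ℝ) : symmTraceless ι :=
  (2 * c / (Fintype.card ι * (Fintype.card ι + 2))) • binghamScore θ

theorem norm_scoreShift_sq [Nonempty ι] (c : ℝ) (hθ : θ ⬝ᵥ θ = 1) :
    ‖scoreShift c θ‖ ^ 2 = 2 * (Fintype.card ι - 1) * (c / Fintype.card ι) ^ 2 /
      (Fintype.card ι + 2) := by
  have hcard : (Fintype.card ι : ℝ) ≠ 0 := by simp
  rw [scoreShift, norm_smul, mul_pow, norm_binghamScore_sq hθ, Real.norm_eq_abs, sq_abs]
  field_simp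

namespace IsUniformOnSphere

variable [DecidableEq ι]

theorem ae_norm_binghamScore_le [Nonempty ι] (hU : IsUniformOnSphere U) {P : Measure (ι → ℝ)}
    (hP : P ≪ U) :
    ∀ᵐ y ∂P, ‖binghamScore y‖ ≤ √((Fintype.card ι + 2) * (Fintype.card ι - 1) / 2) := by
  filter_upwards [hP.ae_le hU.ae_dotProduct_self] with y hy
  exact le_sqrt_of_sq_le (norm_binghamScore_sq hy).le

variable [IsProbabilityMeasure U] {f : ℝ → ℝ} {κ : ℕ → ℝ} {c : ℝ}

theorem tendsto_sqrt_mul_integral_inner_binghamScore [Nonempty ι]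
    (hU : IsUniformOnSphere U) (hθ : θ ⬝ᵥ θ = 1) (hf : Measurable f) (hf0 : f 0 = 1)
    (hf' : HasDerivAt f 1 0)
    (hκ : Tendsto (fun n : ℕ => √n * κ n) atTop (𝓝 c)) (T : symmTraceless ι) :
    Tendsto (fun n : ℕ => √n *
        ∫ y, inner ℝ (binghamScore y) T ∂reweight U f (κ n) fun y => (θ ⬝ᵥ y) ^ 2)
      atTop (𝓝 (inner ℝ (scoreShift c θ) T)) := by
  have hcard : (Fintype.card ι : ℝ) ≠ 0 := by simp
  have hscore := continuous_binghamScore (ι := ι)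
  have hlim := tendsto_mul_integral_reweight (by fun_prop)
    (hU.ae_abs_dotProduct_sq_le_one hθ) hf hf0 hf' (tendsto_zero_of_tendsto_sqrt_mul hκ)
    (hU.integrable (by fun_prop)) (hU.integral_inner_binghamScore T) hκ
  convert hlim using 2
  rw [scoreShift, real_inner_smul_left (binghamScore θ)]
  have hcov := hU.integral_inner_binghamScore_mul_sq θ T
  field_simp
  linear_combination -c * hcov

theorem tendsto_integral_inner_binghamScore_sq (hU : IsUniformOnSphere U)
    (hθ : θ ⬝ᵥ θ = 1) (hf : Measurable f) (hf0 : f 0 = 1) (hfc : ContinuousAt f 0)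
    (hκ : Tendsto κ atTop (𝓝 0)) (T : symmTraceless ι) :
    Tendsto (fun n =>
        ∫ y, inner ℝ (binghamScore y) T ^ 2 ∂reweight U f (κ n) fun y => (θ ⬝ᵥ y) ^ 2)
      atTop (𝓝 (‖T‖ ^ 2)) := by
  have hscore := continuous_binghamScore (ι := ι)
  rw [← hU.integral_inner_binghamScore_sq T]
  exact tendsto_integral_reweight (by fun_prop) (hU.ae_abs_dotProduct_sq_le_one hθ) hf hf0
    hfc hκ (hU.integrable (by fun_prop))

theorem tendsto_integral_inv_sqrt_smul_sum_binghamScore [Nonempty ι]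
    (hU : IsUniformOnSphere U) (hθ : θ ⬝ᵥ θ = 1) (hf : Measurable f) (hf0 : f 0 = 1)
    (hf' : HasDerivAt f 1 0) (hκ : Tendsto (fun n : ℕ => √n * κ n) atTop (𝓝 c))
    (g : BoundedContinuousFunction (symmTraceless ι) ℝ) :
    Tendsto (fun n : ℕ => ∫ x, g ((√n)⁻¹ • ∑ i, binghamScore (x i))
        ∂Measure.pi fun _ : Fin n => reweight U f (κ n) fun y => (θ ⬝ᵥ y) ^ 2)
      atTop (𝓝 (∫ z, g (z + scoreShift c θ) ∂stdGaussian (symmTraceless ι))) := by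
  set P := fun n => reweight U f (κ n) fun y => (θ ⬝ᵥ y) ^ 2
  have hscore := (continuous_binghamScore (ι := ι)).measurable
  have hκ0 := tendsto_zero_of_tendsto_sqrt_mul hκ
  have hP : ∀ᶠ n in atTop, IsProbabilityMeasure (P n) := eventually_isProbabilityMeasure_reweight
    (by fun_prop) (hU.ae_abs_dotProduct_sq_le_one hθ) hf hf0 hf'.continuousAt hκ0
  have hlim := tendsto_integral_inv_sqrt_smul_sum_pi
    (ν := fun n => (P n).map binghamScore) (m := scoreShift c θ)
    (hP.mono fun n _ => Measure.isProbabilityMeasure_map (by fun_prop))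
    (fun n => (ae_map_iff (by fun_prop) (measurableSet_le (by fun_prop) (by fun_prop))).mpr
      (hU.ae_norm_binghamScore_le (withDensity_absolutelyContinuous _ _)))
    (fun T => ?_) (fun T => ?_) g
  · refine hlim.congr' (hP.mono fun n _ => ?_)
    have hscores : Measurable fun (x : Fin n → ι → ℝ) i => binghamScore (x i) := by fun_prop
    rw [← Measure.pi_map_pi fun _ => hscore.aemeasurable,
      integral_map hscores.aemeasurable (by fun_prop)]
  · simp_rw [integral_map (f := fun x => inner ℝ x T) hscore.aemeasurable (by fun_prop)]
    exact hU.tendsto_sqrt_mul_integral_inner_binghamScore hθ hf hf0 hf' hκ T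
  · simp_rw [integral_map (f := fun x => inner ℝ x T ^ 2) hscore.aemeasurable (by fun_prop)]
    exact hU.tendsto_integral_inner_binghamScore_sq hθ hf hf0 hf'.continuousAt hκ0 T

end IsUniformOnSphere

end ScoreLimit

section Bingham

variable {p : ℕ} {U : Measure (Fin p → ℝ)}

namespace IsUniformOnSphere

theorem withDensity_cKF_div_c0_eq_reweight [IsProbabilityMeasure U] (hU : IsUniformOnSphere U)
    (hp : 2 ≤ p) {θ : Fin p → ℝ} (hθ : θ ⬝ᵥ θ = 1) {f : ℝ → ℝ} (hf : Measurable f) (κ : ℝ) :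
    U.withDensity (fun y => ENNReal.ofReal
        ((cKF p κ f / c0 p) * f (κ * (y ⬝ᵥ θ) ^ 2))) =
      reweight U f κ fun y => (θ ⬝ᵥ y) ^ 2 := by
  have h := hU.cKF_div_c0_eq (by simpa using hp) hθ κ hf
  rw [Fintype.card_fin] at h
  rw [h, reweight]
  simp_rw [dotProduct_comm θ]

theorem ae_pi_norm_inv_sqrt_smul_sum_binghamScore_sq [NeZero p] (hU : IsUniformOnSphere U)
    {P : Measure (Fin p → ℝ)} [SigmaFinite P] (hP : P ≪ U) {n : ℕ} (hn : n ≠ 0) :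
    ∀ᵐ x ∂Measure.pi fun _ : Fin n => P, ‖(√n)⁻¹ • ∑ i, binghamScore (x i)‖ ^ 2 =
      n * p * (p + 2) / 2 * ((Sn p n x * Sn p n x).trace - 1 / p) := by
  have hsphere : ∀ᵐ x ∂Measure.pi fun _ : Fin n => P, ∀ i, x i ⬝ᵥ x i = 1 :=
    eventually_all.mpr fun i =>
      Measure.tendsto_eval_ae_ae.eventually (p := fun y => y ⬝ᵥ y = 1)
        (hP.ae_le hU.ae_dotProduct_self)
  exact hsphere.mono fun x hx => norm_inv_sqrt_smul_sum_binghamScore_sq hn hx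

end IsUniformOnSphere

end Bingham

theorem Bingham_statistic_noncentral_chi_square_limit_general {p : ℕ} (hp : 2 ≤ p)
    {U : Measure (Fin p → ℝ)} [IsProbabilityMeasure U] (hU : IsUniformOnSphere U)
    {θ : Fin p → ℝ} (hθ : θ ⬝ᵥ θ = 1)
    {f : ℝ → ℝ} (hf : Measurable f) (hf0 : f 0 = 1) (hf' : HasDerivAt f 1 0)
    {κ : ℕ → ℝ} {τ : ℝ} (hκ : Tendsto (fun n : ℕ => √n * κ n) atTop (𝓝 (τ * p)))
    {μ : Fin (p * (p + 1) / 2 - 1) → ℝ}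
    (hμ : ∑ i, μ i ^ 2 = 2 * ((p : ℝ) - 1) * τ ^ 2 / ((p : ℝ) + 2))
    (g : BoundedContinuousFunction ℝ ℝ) :
    Tendsto (fun n : ℕ =>
        ∫ x, g (n * p * (p + 2) / 2 * ((Sn p n x * Sn p n x).trace - 1 / p))
          ∂Measure.pi fun _ : Fin n => U.withDensity fun y =>
            ENNReal.ofReal ((cKF p (κ n) f / c0 p) * f (κ n * (y ⬝ᵥ θ) ^ 2)))
      atTop (𝓝 (∫ z, g (∑ i, (z i + μ i) ^ 2) ∂Measure.pi fun _ => gaussianReal 0 1)) := by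
  have : NeZero p := ⟨by lia⟩
  simp_rw [hU.withDensity_cKF_div_c0_eq_reweight hp hθ hf]
  let gsq : BoundedContinuousFunction (symmTraceless (Fin p)) ℝ :=
    g.compContinuous ⟨fun z => ‖z‖ ^ 2, by fun_prop⟩
  have hshift : ‖scoreShift (τ * p) θ‖ ^ 2 = ∑ i, μ i ^ 2 := by
    rw [norm_scoreShift_sq _ hθ, hμ, Fintype.card_fin, mul_div_cancel_right₀ _ (NeZero.ne _)]
  rw [← integral_comp_norm_add_sq_stdGaussian (by simp [finrank_symmTraceless]) hshift
    g.continuous.stronglyMeasurable]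
  refine (hU.tendsto_integral_inv_sqrt_smul_sum_binghamScore hθ hf hf0 hf' hκ gsq).congr' ?_
  filter_upwards [eventually_ne_atTop 0] with n hn
  exact integral_congr_ae ((hU.ae_pi_norm_inv_sqrt_smul_sum_binghamScore_sq
    (withDensity_absolutelyContinuous _ _) hn).mono fun x hx => congrArg g hx)

/-- Theorem 4.2: non-null limiting distribution of the Bingham statistic.
Under `P^{(n)}_{θ,κ_n,f}` with `κ_n = τ_n p/√n`, `τ_n → τ`, the Bingham statistic
`Q^{(n)}(x) = (np(p+2)/2)(tr[S_n(x)²] - 1/p)` converges in distribution to the noncentral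
chi-square with `d_p = p(p+1)/2 - 1` degrees of freedom and noncentrality
`2(p-1)τ²/(p+2)`, realized as the law of `‖G + μ‖²` for a standard Gaussian `G` on
`ℝ^{d_p}` and any `μ` with `‖μ‖² = 2(p-1)τ²/(p+2)`. -/
theorem Bingham_statistic_noncentral_chi_square_limit
    (p : ℕ) (hp : 2 ≤ p)
    (U : Measure (Fin p → ℝ)) [IsProbabilityMeasure U]
    (hUsphere : U {x : Fin p → ℝ | ∑ a, x a ^ 2 = 1}ᶜ = 0)
    (hUrot : ∀ O : Matrix (Fin p) (Fin p) ℝ, O * Oᵀ = 1 →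
      Measure.map (fun x => O.mulVec x) U = U)
    (θ : Fin p → ℝ) (hθ : ∑ a, θ a ^ 2 = 1)
    (f : ℝ → ℝ) (hf_pos : ∀ x, 0 < f x) (hf_mono : Monotone f)
    (hf_diff : ∀ᶠ x in 𝓝 (0:ℝ), DifferentiableAt ℝ f x)
    (hf_diff2 : DifferentiableAt ℝ (deriv f) 0)
    (hf0 : f 0 = 1) (hf'0 : deriv f 0 = 1)
    (τseq : ℕ → ℝ) (τ : ℝ) (hτ : Tendsto τseq atTop (𝓝 τ))
    (κ : ℕ → ℝ) (hκ : ∀ n, κ n = τseq n * p / Real.sqrt n)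
    (Q : ∀ n : ℕ, (Fin n → (Fin p → ℝ)) → ℝ)
    (hQ : ∀ n x, Q n x =
      ((n:ℝ) * p * ((p:ℝ) + 2) / 2) * (Matrix.trace (Sn p n x * Sn p n x) - 1 / (p:ℝ))) :
    ∀ μ : Fin (p * (p + 1) / 2 - 1) → ℝ,
      (∑ i, μ i ^ 2) = 2 * ((p:ℝ) - 1) * τ ^ 2 / ((p:ℝ) + 2) →
      ∀ g : BoundedContinuousFunction ℝ ℝ,
        Tendsto (fun n => ∫ x, g (Q n x)
            ∂(Measure.pi (fun _ : Fin n =>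
              U.withDensity (fun y => ENNReal.ofReal
                ((cKF p (κ n) f / c0 p) * f (κ n * (∑ a, y a * θ a) ^ 2)))))) atTop
          (𝓝 (∫ z, g (∑ i, (z i + μ i) ^ 2)
            ∂(Measure.pi (fun _ : Fin (p * (p + 1) / 2 - 1) => gaussianReal 0 1)))) := by
  intro μ hμ g
  have hκ' : Tendsto (fun n : ℕ => √n * κ n) atTop (𝓝 (τ * p)) := by
    simpa only [hκ] using tendsto_sqrt_mul_mul_div_sqrt hτ p
  simp_rw [hQ]
  exact Bingham_statistic_noncentral_chi_square_limit_general hp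
    (isUniformOnSphere_iff.mpr ⟨hUsphere, hUrot⟩) ((dotProduct_self_eq_sum_sq θ).trans hθ)
    hf_mono.measurable hf0 (hf'0 ▸ hf_diff.self_of_nhds.hasDerivAt) hκ' hμ g

end
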